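/- arXiv:1008.0763 — 2 statements merged into one kernel-verified Lean document; each statement's English description precedes it below -/
import Mathlib

section
/- Let G = C_{n_1} ⊕ … ⊕ C_{n_r} with r ≥ 2 and integers 1 < n_1 ≤ … ≤ n_r, let k ∈ ℕ₀, and let t ∈ [2, r] be such that n_s < Π_{i=1}^{s−1} n_i for every s ∈ [t+1, r]. Then: (1) if n_{t−1} ≠ n_t, then SD_k(G) ≥ Σ_{i ∈ [1,r], i ≠ t} (n_i − 1) + SD_{k+r−1}(C_{n_t}); (2) if k + r > 2, then SD_k(G) ≥ Σ_{i ∈ [1,r], i ≠ t} (n_i − 1) + SD_{k+r−2}(C_{n_t}). -/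
open Multiset

/-- A sequence (finite multiset) over `G` is zero-sumfree if every nonempty
subsequence has nonzero sum. -/
def IsZeroSumfree {G : Type*} [AddCommMonoid G] (S : Multiset G) : Prop :=
  ∀ T ≤ S, T ≠ 0 → T.sum ≠ 0

/-- A minimal zero-sum sequence: a nonempty sequence with sum zero all of whose
nonempty proper subsequences have nonzero sum. -/
def IsMinimalZeroSum {G : Type*} [AddCommMonoid G] (S : Multiset G) : Prop :=
  S ≠ 0 ∧ S.sum = 0 ∧ ∀ T ≤ S, T ≠ 0 → T ≠ S → T.sum ≠ 0

/-- The cumulated multiplicity of level `ℓ` of a sequence: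
`cm_ℓ(S) = Σ_{g ∈ G} max {0, v_g(S) − ℓ}`. -/
noncomputable def cmul {G : Type*} [AddCommMonoid G] (ℓ : ℕ) (S : Multiset G) : ℕ :=
  letI := Classical.decEq G
  ∑ g ∈ S.toFinset, (S.count g - ℓ)

/-- `SD_{(k,ℓ)}(G)`: the maximum length of a minimal zero-sum sequence `S` over `G`
with `cm_ℓ(S) ≤ k`. -/
noncomputable def SDpair (G : Type*) [AddCommMonoid G] (k ℓ : ℕ) : ℕ :=
  sSup {m | ∃ S : Multiset G, IsMinimalZeroSum S ∧ cmul ℓ S ≤ k ∧ Multiset.card S = m}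

/-- `SD_k(G)`: the `k`-th Strong Davenport constant. -/
noncomputable def SDk (G : Type*) [AddCommMonoid G] (k : ℕ) : ℕ := SDpair G k 1

/-- The Strong Davenport constant `SD(G) = SD_0(G)`. -/
noncomputable def SD (G : Type*) [AddCommMonoid G] : ℕ := SDk G 0

/-- The Olson constant `Ol(G) = SD_1(G)`. -/
noncomputable def Ol (G : Type*) [AddCommMonoid G] : ℕ := SDk G 1

/-- `ol_k(G)`: the maximum length of a zero-sumfree sequence `S` over `G` with
`cm(S) ≤ k`. -/
noncomputable def olk (G : Type*) [AddCommMonoid G] (k : ℕ) : ℕ :=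
  sSup {m | ∃ S : Multiset G, IsZeroSumfree S ∧ cmul 1 S ≤ k ∧ Multiset.card S = m}

/-- `Ol_k(G)`: the smallest integer `ℓ` such that every sequence `S` over `G` with
`cm(S) ≤ k` and `|S| ≥ ℓ` has a nonempty zero-sum subsequence. -/
noncomputable def Olk (G : Type*) [AddCommMonoid G] (k : ℕ) : ℕ :=
  sInf {m | ∀ S : Multiset G, cmul 1 S ≤ k → m ≤ Multiset.card S →
    ∃ T, T ≤ S ∧ T ≠ 0 ∧ T.sum = 0}

/-- The Davenport constant `D(G)`: the maximum length of a minimal zero-sum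
sequence over `G`. -/
noncomputable def DavenportD (G : Type*) [AddCommMonoid G] : ℕ :=
  sSup {m | ∃ S : Multiset G, IsMinimalZeroSum S ∧ Multiset.card S = m}

section helpers

lemma cmul_add_card {G : Type*} [AddCommMonoid G] [DecidableEq G] (S : Multiset G) :
    cmul 1 S + S.toFinset.card = Multiset.card S := by
  have h : cmul 1 S = ∑ g ∈ S.toFinset, (S.count g - 1) := by
    unfold cmul
    refine Finset.sum_congr ?_ ?_
    · ext x; simp
    · intro x _
      congr!
  rw [h, Finset.card_eq_sum_ones, ← Finset.sum_add_distrib, ← Multiset.toFinset_sum_count_eq S]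
  refine Finset.sum_congr rfl fun x hx => ?_
  have : 0 < S.count x := Multiset.count_pos.2 (Multiset.mem_toFinset.1 hx)
  omega

lemma cmul_nodup {G : Type*} [AddCommMonoid G] {S : Multiset G} (h : S.Nodup) :
    cmul 1 S = 0 := by
  classical
  have h1 := cmul_add_card S
  rw [Multiset.toFinset_card_of_nodup h] at h1
  omega

lemma cmul_cons {G : Type*} [AddCommMonoid G] (a : G) (S : Multiset G) :
    cmul 1 (a ::ₘ S) ≤ cmul 1 S + 1 := by
  classical
  have h1 := cmul_add_card S
  have h2 := cmul_add_card (a ::ₘ S)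
  have h3 : S.toFinset.card ≤ (a ::ₘ S).toFinset.card :=
    Finset.card_le_card (by intro x; simp; tauto)
  rw [Multiset.card_cons] at h2
  omega

lemma cmul_add {G : Type*} [AddCommMonoid G] (S T : Multiset G) (h : ∀ x ∈ S, x ∉ T) :
    cmul 1 (S + T) = cmul 1 S + cmul 1 T := by
  classical
  have h1 := cmul_add_card S
  have h2 := cmul_add_card T
  have h3 := cmul_add_card (S + T)
  rw [Multiset.toFinset_add, Finset.card_union_of_disjoint, Multiset.card_add] at h3
  · omega
  · rw [Finset.disjoint_left]
    intro x; simpa using h x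

lemma exists_erase {G : Type*} [AddCommMonoid G] [DecidableEq G] (S : Multiset G) (h : S ≠ 0) :
    ∃ g ∈ S, cmul 1 (S.erase g) ≤ cmul 1 S - 1 := by
  by_cases hS : S.Nodup
  · obtain ⟨g, hg⟩ := Multiset.exists_mem_of_ne_zero h
    exact ⟨g, hg, by rw [cmul_nodup (hS.erase g)]; omega⟩
  · rw [Multiset.nodup_iff_count_le_one] at hS
    push Not at hS
    obtain ⟨g, hg⟩ := hS
    have hgS : g ∈ S := Multiset.count_pos.1 (by omega)
    refine ⟨g, hgS, ?_⟩
    have h1 := cmul_add_card S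
    have h2 := cmul_add_card (S.erase g)
    have h3 : (S.erase g).toFinset = S.toFinset := by
      ext x
      simp only [Multiset.mem_toFinset]
      by_cases hx : x = g
      · subst hx
        refine ⟨fun _ => hgS, fun _ => ?_⟩
        rw [← Multiset.count_pos, Multiset.count_erase_self]
        omega
      · exact Multiset.mem_erase_of_ne hx
    rw [h3, Multiset.card_erase_of_mem hgS, Nat.pred_eq_sub_one] at h2
    omega

lemma IsMinimalZeroSum.ne_zero' {G : Type*} [AddCommMonoid G] {S : Multiset G}
    (h : IsMinimalZeroSum S) (hc : 2 ≤ Multiset.card S) {g : G} (hg : g ∈ S) : g ≠ 0 := by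
  have := h.2.2 {g} (by simpa using hg) (by simp) (by rintro rfl; simp at hc)
  simpa using this

/-- replacement step -/
lemma step {G : Type*} [AddCommGroup G] [DecidableEq G] {m : ℕ} (hm : 1 < m) (π : G →+ ZMod m)
    {S A : Multiset G} {g : G} (hS : IsMinimalZeroSum S) (hg : g ∈ S)
    (hSπ : ∀ x ∈ S, π x = 0) (hAπ : ∀ x ∈ A, π x = 1) (hA : Multiset.card A = m)
    (hAs : A.sum = g) : IsMinimalZeroSum (S.erase g + A) := by
  obtain ⟨h0, hs, hmin⟩ := hS
  have hcons : g ::ₘ S.erase g = S := Multiset.cons_erase hg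
  refine ⟨?_, ?_, ?_⟩
  · intro h
    have : Multiset.card (S.erase g + A) = 0 := by rw [h]; simp
    rw [Multiset.card_add] at this
    omega
  · rw [Multiset.sum_add, hAs, add_comm, ← Multiset.sum_cons, hcons, hs]
  · intro T hT hT0 hTne hTs
    set X := S.erase g
    obtain ⟨T1, T2, h1, h2, rfl⟩ : ∃ T1 T2, T1 ≤ X ∧ T2 ≤ A ∧ T = T1 + T2 := by
      refine ⟨T ∩ X, T - X, Multiset.inter_le_right, ?_, ?_⟩
      · rw [tsub_le_iff_left]; exact hT
      · ext x
        simp only [Multiset.count_add, Multiset.count_inter, Multiset.count_sub]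
        omega
    have hXS : X ≤ S := Multiset.erase_le g S
    have hp1 : π T1.sum = 0 := by
      rw [map_multiset_sum]
      apply Multiset.sum_eq_zero
      intro y hy
      obtain ⟨x, hx, rfl⟩ := Multiset.mem_map.1 hy
      exact hSπ x (Multiset.mem_of_le (h1.trans hXS) hx)
    have hp2 : π T2.sum = (Multiset.card T2 : ZMod m) := by
      rw [map_multiset_sum, Multiset.map_congr rfl (g := fun _ => (1 : ZMod m))
        (fun x hx => hAπ x (Multiset.mem_of_le h2 hx))]
      simp
    have hp : (Multiset.card T2 : ZMod m) = 0 := by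
      have h5 : π (T1 + T2).sum = 0 := by rw [hTs, _root_.map_zero]
      rw [Multiset.sum_add, _root_.map_add, hp1, hp2, zero_add] at h5
      exact h5
    rw [ZMod.natCast_eq_zero_iff] at hp
    have hle : Multiset.card T2 ≤ m := hA ▸ Multiset.card_le_card h2
    rcases Nat.eq_zero_or_pos (Multiset.card T2) with hz | hz
    · rw [Multiset.card_eq_zero] at hz
      subst hz
      rw [add_zero] at hT0 hTs
      refine hmin T1 (h1.trans hXS) hT0 ?_ hTs
      rintro rfl
      have := Multiset.card_le_card h1
      have h4 : Multiset.card (X) + 1 = Multiset.card T1 := by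
        rw [← Multiset.card_cons g X, hcons]
      omega
    · have : m ≤ Multiset.card T2 := Nat.le_of_dvd hz hp
      have hT2 : T2 = A := Multiset.eq_of_le_of_card_le h2 (by omega)
      subst hT2
      refine hmin (g ::ₘ T1) ?_ (by simp) ?_ ?_
      · rw [← hcons]; exact Multiset.cons_le_cons g h1
      · intro h
        rw [← hcons, Multiset.cons_inj_right] at h
        exact hTne (by rw [h])
      · rw [Multiset.sum_cons, ← hAs, add_comm, ← Multiset.sum_add, hTs]

lemma sum_univ_elem {H : Type*} [AddCommGroup H] [Fintype H] (h2 : ∀ x : H, x + x = 0)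
    (hc : 3 ≤ Fintype.card H) : ∑ x : H, x = 0 := by
  classical
  let _ : Module (ZMod 2) H := AddCommGroup.zmodModule (fun x => by rw [two_nsmul]; exact h2 x)
  rw [← Module.forall_dual_apply_eq_zero_iff (ZMod 2)]
  intro f
  have hni : ¬ Function.Injective f := by
    intro hi
    have := Fintype.card_le_of_injective f hi
    rw [ZMod.card] at this
    omega
  obtain ⟨a, ha, hfa⟩ : ∃ a : H, a ≠ 0 ∧ f a = 0 := by
    by_contra hcon
    push Not at hcon
    exact hni ((injective_iff_map_eq_zero f).2 fun a ha => by
      by_contra h; exact hcon a h ha)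
  rw [map_sum]
  refine Finset.sum_involution (fun x _ => x + a) ?_ ?_ ?_ ?_
  · intro x _
    rw [_root_.map_add, hfa, add_zero, ← _root_.map_add, h2, _root_.map_zero]
  · intro x _ _ h
    exact ha (by simpa using h)
  · intro x _; exact Finset.mem_univ _
  · intro x _
    rw [add_assoc, h2, add_zero]

/-- two distinct elements with sum `h` -/
lemma pair_sum {H : Type*} [AddCommGroup H] [Fintype H] [DecidableEq H] (h : H)
    (hh : ¬ ∀ x : H, x + x = h) : ∃ A : Finset H, A.card = 2 ∧ ∑ x ∈ A, x = h := by
  push Not at hh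
  obtain ⟨x, hx⟩ := hh
  have hne : x ≠ h - x := fun e => hx (by rw [eq_sub_iff_add_eq] at e; exact e)
  exact ⟨{x, h - x}, Finset.card_pair hne, by rw [Finset.sum_pair hne]; abel⟩

/-- the middle range -/
lemma mid_sum {H : Type*} [AddCommGroup H] [Fintype H] [DecidableEq H] (g : H) (m : ℕ)
    (hm : 3 ≤ m) (hm2 : 2 * m < Fintype.card H + 3) :
    ∃ A : Finset H, A.card = m ∧ ∑ x ∈ A, x = g := by
  classical
  have key : ∃ C : Finset H, C.card = m - 2 ∧
      (Finset.univ.filter (fun x : H => x + x = g - ∑ c ∈ C, c)).card ≤ 1 := by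
    by_cases hinj : ∀ x : H, x + x = 0 → x = 0
    · obtain ⟨C, -, hC⟩ := Finset.exists_subset_card_eq
        (s := (Finset.univ : Finset H)) (n := m - 2) (by rw [Finset.card_univ]; omega)
      refine ⟨C, hC, ?_⟩
      rw [Finset.card_le_one]
      intro a ha b hb
      simp only [Finset.mem_filter, Finset.mem_univ, true_and] at ha hb
      have : (a - b) + (a - b) = 0 := by
        have : (a - b) + (a - b) = (a + a) - (b + b) := by abel
        rw [this, ha, hb, sub_self]
      exact sub_eq_zero.1 (hinj _ this)
    · -- doubling not surjective
      have hns : ¬ Function.Surjective (fun x : H => x + x) := by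
        intro hs
        have hi := Finite.injective_iff_surjective.2 hs
        exact hinj fun x hx => hi (by simpa using hx)
      have hex : ∃ C : Finset H, C.card = m - 2 ∧ ∀ x : H, x + x ≠ g - ∑ c ∈ C, c := by
        by_contra hcon
        push Not at hcon
        apply hns
        obtain ⟨C, -, hC⟩ := Finset.exists_subset_card_eq
          (s := (Finset.univ : Finset H)) (n := m - 2) (by rw [Finset.card_univ]; omega)
        have hsw : ∀ c ∈ C, ∀ d ∉ C, ∃ x : H, x + x = c - d := by
          intro c hc d hd
          obtain ⟨x, hx⟩ := hcon C hC
          have hd' : d ∉ C.erase c := fun h => hd (Finset.mem_of_mem_erase h)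
          have hcp : 0 < C.card := Finset.card_pos.2 ⟨c, hc⟩
          obtain ⟨y, hy⟩ := hcon (insert d (C.erase c)) (by
            rw [Finset.card_insert_of_notMem hd', Finset.card_erase_of_mem hc]; omega)
          rw [Finset.sum_insert hd'] at hy
          rw [← Finset.add_sum_erase C _ hc] at hx
          refine ⟨y - x, ?_⟩
          have : (y - x) + (y - x) = (y + y) - (x + x) := by abel
          rw [this, hx, hy]; abel
        obtain ⟨c, hc⟩ : C.Nonempty := Finset.card_pos.1 (by omega)
        obtain ⟨d, hd⟩ : ∃ d, d ∉ C := by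
          by_contra hall
          push Not at hall
          have : C = Finset.univ := Finset.eq_univ_iff_forall.2 hall
          rw [this, Finset.card_univ] at hC
          omega
        have hcd := hsw c hc d hd
        -- everything is congruent to c
        have hall : ∀ z : H, ∃ x : H, x + x = c - z := by
          intro z
          by_cases hz : z ∈ C
          · obtain ⟨x, hx⟩ := hcd
            obtain ⟨y, hy⟩ := hsw z hz d hd
            refine ⟨x - y, ?_⟩
            have : (x - y) + (x - y) = (x + x) - (y + y) := by abel
            rw [this, hx, hy]; abel
          · exact hsw c hc z hz
        intro z
        obtain ⟨x, hx⟩ := hall (c - z)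
        exact ⟨x, by simp only [hx]; abel⟩
      obtain ⟨C, hC, hx⟩ := hex
      refine ⟨C, hC, ?_⟩
      rw [Finset.filter_false_of_mem (fun x _ => hx x)]
      simp
  obtain ⟨C, hC, hcard⟩ := key
  set h := g - ∑ c ∈ C, c with hh
  obtain ⟨x, hx⟩ : ∃ x : H, x ∉ C ∪ C.image (fun c => h - c) ∪
      Finset.univ.filter (fun x : H => x + x = h) := by
    by_contra hall
    push Not at hall
    have h1 := Finset.eq_univ_iff_forall.2 hall
    have h2 := congrArg Finset.card h1
    rw [Finset.card_univ] at h2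
    have h3 := Finset.card_union_le (C ∪ C.image (fun c => h - c))
      (Finset.univ.filter (fun x : H => x + x = h))
    have h4 := Finset.card_union_le C (C.image (fun c => h - c))
    have h5 : (C.image (fun c => h - c)).card ≤ C.card := Finset.card_image_le
    omega
  simp only [Finset.mem_union, Finset.mem_image, Finset.mem_filter, Finset.mem_univ, true_and,
    not_or, not_exists, not_and] at hx
  obtain ⟨⟨hx1, hx2⟩, hx3⟩ := hx
  have hy : h - x ∉ C := fun hc => hx2 _ hc (by abel)
  have hne : x ≠ h - x := fun e => hx3 (by rw [eq_sub_iff_add_eq] at e; exact e)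
  refine ⟨insert x (insert (h - x) C), ?_, ?_⟩
  · rw [Finset.card_insert_of_notMem (by simp [hne, hx1]), Finset.card_insert_of_notMem hy]
    omega
  · rw [Finset.sum_insert (by simp [hne, hx1]), Finset.sum_insert hy, hh]
    abel

lemma compl_sum {H : Type*} [AddCommGroup H] [Fintype H] [DecidableEq H] (g : H) (m : ℕ)
    (hm : m ≤ Fintype.card H)
    (h : ∃ A : Finset H, A.card = Fintype.card H - m ∧ ∑ x ∈ A, x = (∑ x : H, x) - g) :
    ∃ A : Finset H, A.card = m ∧ ∑ x ∈ A, x = g := by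
  obtain ⟨A, hA, hs⟩ := h
  refine ⟨Aᶜ, by rw [Finset.card_compl]; omega, ?_⟩
  have := Finset.sum_add_sum_compl A (fun x : H => x)
  rw [hs] at this
  have h2 := eq_sub_of_add_eq' this
  rw [h2]; abel

lemma single_sum {H : Type*} [AddCommGroup H] (g : H) :
    ∃ A : Finset H, A.card = 1 ∧ ∑ x ∈ A, x = g := ⟨{g}, by simp, by simp⟩

lemma subset_sum {H : Type*} [AddCommGroup H] [Fintype H] [DecidableEq H] (g : H) (hg : g ≠ 0)
    (m : ℕ) (hm : 1 ≤ m) (hm2 : m < Fintype.card H) :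
    ∃ A : Finset H, A.card = m ∧ ∑ x ∈ A, x = g := by
  rcases Nat.lt_or_ge m 3 with h3 | h3
  · interval_cases m
    · exact single_sum g
    · exact pair_sum g fun h => hg (by rw [← h 0, add_zero])
  · by_cases hmid : 2 * m < Fintype.card H + 3
    · exact mid_sum g m h3 hmid
    · apply compl_sum g m hm2.le
      obtain ⟨m', hm'⟩ : ∃ m', m' = Fintype.card H - m := ⟨_, rfl⟩
      rw [← hm']
      rcases Nat.lt_or_ge m' 3 with h3' | h3'
      · have : 1 ≤ m' := by omega
        interval_cases m'
        · exact single_sum _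
        · refine pair_sum _ fun h => ?_
          have h0 := h 0
          rw [add_zero] at h0
          rw [← h0] at h
          rw [sum_univ_elem h (by omega), zero_sub] at h0
          exact hg (by simpa using h0.symm)
      · exact mid_sum _ m' h3' (by omega)

/-- elements supported on `I` -/
def suppSub {r : ℕ} (n : Fin r → ℕ) (I : Finset (Fin r)) : AddSubgroup (∀ i : Fin r, ZMod (n i)) where
  carrier := {x | ∀ i, i ∉ I → x i = 0}
  zero_mem' := fun i _ => rfl
  add_mem' := fun {a b} ha hb i hi => by
    rw [Pi.add_apply, ha i hi, hb i hi, add_zero]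
  neg_mem' := fun {a} ha i hi => by
    rw [Pi.neg_apply, ha i hi, neg_zero]

lemma card_suppSub {r : ℕ} (n : Fin r → ℕ) [∀ i, NeZero (n i)] (I : Finset (Fin r)) :
    ∏ i ∈ I, n i ≤ Nat.card (suppSub n I) := by
  classical
  have h1 : Nat.card (∀ i : I, ZMod (n i)) = ∏ i ∈ I, n i := by
    rw [Nat.card_pi, ← Finset.prod_coe_sort I n]
    exact Finset.prod_congr rfl fun i _ => Nat.card_zmod _
  rw [← h1]
  refine Nat.card_le_card_of_injective
    (fun f => (⟨fun i => if h : i ∈ I then f ⟨i, h⟩ else 0, fun i hi => by simp [hi]⟩ :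
      suppSub n I)) ?_
  intro f g hfg
  ext ⟨i, hi⟩
  have := congrFun (congrArg Subtype.val hfg) i
  simpa [hi] using this

/-- the state of the construction -/
def St {r : ℕ} (n : Fin r → ℕ) (I : Finset (Fin r)) (c L : ℕ) : Prop :=
  ∃ S : Multiset (∀ i : Fin r, ZMod (n i)), IsMinimalZeroSum S ∧ cmul 1 S ≤ c ∧
    Multiset.card S = L ∧ ∀ x ∈ S, x ∈ suppSub n I

lemma St_step_aux {r : ℕ} (n : Fin r → ℕ) (hn1 : ∀ i, 1 < n i) (I : Finset (Fin r)) (i : Fin r)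
    (hi : i ∉ I) (c d L : ℕ) (hL : 2 ≤ L)
    (hA : ∀ g : suppSub n I, g ≠ 0 → ∃ A : Multiset (suppSub n I),
      Multiset.card A = n i ∧ A.sum = g ∧ A.card ≤ d + A.dedup.card) :
    St n I c L → St n (insert i I) (c - 1 + d) (L + (n i - 1)) := by
  classical
  rintro ⟨S, hS, hc, hcard, hsupp⟩
  obtain ⟨g, hg, hge⟩ := exists_erase S hS.1
  have hg0 := hS.ne_zero' (by omega) hg
  obtain ⟨A, hA1, hA2, hA3⟩ := hA ⟨g, hsupp g hg⟩ (by
    intro h; exact hg0 (congrArg Subtype.val h))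
  let e : (∀ i : Fin r, ZMod (n i)) := Pi.single i 1
  let f : suppSub n I → (∀ i : Fin r, ZMod (n i)) := fun a => e + a
  have hf : Function.Injective f := fun a b h => Subtype.ext (add_left_cancel h)
  have hpi : ∀ x ∈ S, Pi.evalAddMonoidHom (fun i => ZMod (n i)) i x = 0 := fun x hx =>
    hsupp x hx i hi
  have hpiA : ∀ x ∈ A.map f, Pi.evalAddMonoidHom (fun i => ZMod (n i)) i x = 1 := by
    intro x hx
    obtain ⟨a, ha, rfl⟩ := Multiset.mem_map.1 hx
    have : (a : ∀ i : Fin r, ZMod (n i)) i = 0 := a.2 i hi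
    simp [f, e, this]
  have hsum : (A.map f).sum = g := by
    have h1 : (A.map f).sum = Multiset.card A • e + (A.map (suppSub n I).subtype).sum := by
      simp only [f]
      rw [Multiset.sum_map_add]
      simp
    have h2 : (A.map (suppSub n I).subtype).sum = g := by
      have := map_multiset_sum (suppSub n I).subtype A
      rw [hA2] at this
      exact this.symm
    have h3 : Multiset.card A • e = 0 := by
      rw [hA1]
      simp only [e]
      rw [← Pi.single_smul]
      simp
    rw [h1, h2, h3, zero_add]
  refine ⟨S.erase g + A.map f, step (hn1 i) (Pi.evalAddMonoidHom (fun i => ZMod (n i)) i) hS hg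
    hpi hpiA (by rw [Multiset.card_map, hA1]) hsum, ?_, ?_, ?_⟩
  · rw [cmul_add]
    · have h1 := cmul_add_card (A.map f)
      have h2 : (A.map f).toFinset.card = A.dedup.card := by
        rw [← Finset.card_val, Multiset.toFinset_val, Multiset.dedup_map_of_injective hf,
          Multiset.card_map]
      rw [h2, Multiset.card_map] at h1
      have : cmul 1 S - 1 ≤ c - 1 := by omega
      omega
    · intro x hx hx2
      have h1 := hpi x (Multiset.mem_of_mem_erase hx)
      have h2 := hpiA x hx2
      rw [h1] at h2
      have : Fact (1 < n i) := ⟨hn1 i⟩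
      exact zero_ne_one h2
  · rw [Multiset.card_add, Multiset.card_map, hA1, Multiset.card_erase_of_mem hg, hcard]
    have := hn1 i
    simp only [Nat.pred_eq_sub_one]
    omega
  · intro x hx j hj
    rw [Finset.mem_insert, not_or] at hj
    rcases Multiset.mem_add.1 hx with h | h
    · exact hsupp x (Multiset.mem_of_mem_erase h) j hj.2
    · obtain ⟨a, ha, rfl⟩ := Multiset.mem_map.1 h
      have : (a : ∀ i : Fin r, ZMod (n i)) j = 0 := a.2 j hj.2
      simp [f, e, this, hj.1]

lemma St_strong {r : ℕ} (n : Fin r → ℕ) (hn1 : ∀ i, 1 < n i) (I : Finset (Fin r)) (i : Fin r)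
    (hi : i ∉ I) (c L : ℕ) (hL : 2 ≤ L) (hlt : n i < ∏ j ∈ I, n j) :
    St n I c L → St n (insert i I) (c - 1) (L + (n i - 1)) := by
  classical
  have hne : ∀ i, NeZero (n i) := fun i => ⟨by have := hn1 i; omega⟩
  have : Fintype (suppSub n I) := Fintype.ofFinite _
  refine St_step_aux n hn1 I i hi c 0 L hL fun g hg => ?_
  have hcard := card_suppSub n I
  rw [Nat.card_eq_fintype_card] at hcard
  obtain ⟨A, h1, h2⟩ := subset_sum g hg (n i) (hn1 i).le (by omega)
  refine ⟨A.val, h1, ?_, ?_⟩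
  · rw [← h2, Finset.sum, Multiset.map_id']
  · rw [Multiset.dedup_eq_self.2 A.nodup]; omega

lemma St_weak {r : ℕ} (n : Fin r → ℕ) (hn1 : ∀ i, 1 < n i) (I : Finset (Fin r)) (i : Fin r)
    (hi : i ∉ I) (c L : ℕ) (hL : 2 ≤ L) (hc : 1 ≤ c) (hlt : n i ≤ ∏ j ∈ I, n j) :
    St n I c L → St n (insert i I) c (L + (n i - 1)) := by
  classical
  have hne : ∀ i, NeZero (n i) := fun i => ⟨by have := hn1 i; omega⟩
  have : Fintype (suppSub n I) := Fintype.ofFinite _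
  have hcc : c = c - 1 + 1 := by omega
  intro h
  rw [hcc]
  refine St_step_aux n hn1 I i hi c 1 L hL (fun g hg => ?_) h
  have hcard := card_suppSub n I
  rw [Nat.card_eq_fintype_card] at hcard
  have := hn1 i
  obtain ⟨A, h1, h2⟩ := subset_sum g hg (n i - 1) (by omega) (by omega)
  have h1' : Multiset.card A.val = n i - 1 := h1
  refine ⟨0 ::ₘ A.val, ?_, ?_, ?_⟩
  · rw [Multiset.card_cons, h1']; omega
  · rw [← h2, Finset.sum, Multiset.map_id', Multiset.sum_cons, zero_add]
  · have h3 : A.val.dedup ≤ (0 ::ₘ A.val).dedup := by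
      rw [Multiset.le_iff_subset (Multiset.nodup_dedup _)]
      intro x hx
      rw [Multiset.mem_dedup] at hx ⊢
      exact Multiset.mem_cons_of_mem hx
    rw [Multiset.dedup_eq_self.2 A.nodup] at h3
    have := Multiset.card_le_card h3
    rw [Multiset.card_cons]; omega

lemma St_chain {r : ℕ} (n : Fin r → ℕ) (hn1 : ∀ i, 1 < n i) (I : Finset (Fin r))
    (c L : ℕ) (hL : 2 ≤ L) (hI : ∀ i, i ∉ I → n i < ∏ j ∈ I ∪ Finset.Iio i, n j)
    (h : St n I c L) : St n Finset.univ (c - Iᶜ.card) (L + ∑ i ∈ Iᶜ, (n i - 1)) := by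
  classical
  have key : ∀ j : ℕ, j ≤ r → St n (I ∪ Iᶜ.filter (fun i => i.val < j))
      (c - (Iᶜ.filter (fun i => i.val < j)).card)
      (L + ∑ i ∈ Iᶜ.filter (fun i => i.val < j), (n i - 1)) := by
    intro j
    induction j with
    | zero => intro _; simpa using h
    | succ j ih =>
      intro hj
      have ih := ih (by omega)
      let a : Fin r := ⟨j, hj⟩
      by_cases ha : a ∈ I
      · have : Iᶜ.filter (fun i => i.val < j + 1) = Iᶜ.filter (fun i => i.val < j) := by
          ext x
          simp only [Finset.mem_filter, Finset.mem_compl]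
          refine ⟨fun ⟨h1, h2⟩ => ⟨h1, ?_⟩, fun ⟨h1, h2⟩ => ⟨h1, by omega⟩⟩
          have : x ≠ a := fun e => h1 (e ▸ ha)
          have : x.val ≠ j := fun e => this (Fin.ext e)
          omega
        rw [this]; exact ih
      · have hins : Iᶜ.filter (fun i => i.val < j + 1) =
            insert a (Iᶜ.filter (fun i => i.val < j)) := by
          ext x
          simp only [Finset.mem_filter, Finset.mem_compl, Finset.mem_insert]
          have e : x = a ↔ x.val = j := Fin.ext_iff
          constructor
          · rintro ⟨h1, h2⟩
            by_cases hx : x.val = j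
            · exact Or.inl (e.2 hx)
            · exact Or.inr ⟨h1, by omega⟩
          · rintro (h1 | ⟨h1, h2⟩)
            · exact ⟨h1 ▸ ha, by have := e.1 h1; omega⟩
            · exact ⟨h1, by omega⟩
        have hna : a ∉ Iᶜ.filter (fun i => i.val < j) := by simp [a]
        have hna2 : a ∉ I ∪ Iᶜ.filter (fun i => i.val < j) := by
          rw [Finset.mem_union, not_or]; exact ⟨ha, hna⟩
        have hun : I ∪ Finset.Iio a = I ∪ Iᶜ.filter (fun i => i.val < j) := by
          ext x
          simp only [Finset.mem_union, Finset.mem_Iio, Finset.mem_filter, Finset.mem_compl,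
            Fin.lt_def, a]
          tauto
        have := St_strong n hn1 _ a hna2 _ _ (by omega) (hun ▸ hI a ha) ih
        rw [hins, Finset.union_insert, Finset.card_insert_of_notMem hna, Finset.sum_insert hna]
        convert this using 1
        · omega
        · rw [add_assoc, add_comm (n a - 1)]
  have := key r le_rfl
  have hf : Iᶜ.filter (fun i => i.val < r) = Iᶜ := by
    apply Finset.filter_true_of_mem
    intro x _; exact x.isLt
  rw [hf, Finset.union_compl] at this
  exact this

lemma bdd_SD (G : Type*) [AddCommMonoid G] [Finite G] (k : ℕ) :
    BddAbove {m | ∃ S : Multiset G, IsMinimalZeroSum S ∧ cmul 1 S ≤ k ∧ Multiset.card S = m} := by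
  classical
  have : Fintype G := Fintype.ofFinite G
  refine ⟨k + Fintype.card G, ?_⟩
  rintro m ⟨S, -, h, rfl⟩
  have h1 := cmul_add_card S
  have h2 : S.toFinset.card ≤ Fintype.card G := Finset.card_le_univ _
  omega

lemma SD_cyclic (N : ℕ) (hN : 1 < N) (c : ℕ) (hc : 1 ≤ c) :
    ∃ S : Multiset (ZMod N), IsMinimalZeroSum S ∧ cmul 1 S ≤ c ∧
      Multiset.card S = SDk (ZMod N) c ∧ 2 ≤ SDk (ZMod N) c := by
  classical
  have : Fact (1 < N) := ⟨hN⟩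
  have : NeZero N := ⟨by omega⟩
  have hmem : 2 ∈ {m | ∃ S : Multiset (ZMod N), IsMinimalZeroSum S ∧ cmul 1 S ≤ c ∧
      Multiset.card S = m} := by
    refine ⟨{1, -1}, ⟨by simp, by simp, ?_⟩, ?_, by simp⟩
    · intro T hT hT0 hTne hs
      have h1 : Multiset.card T ≤ 2 := by simpa using Multiset.card_le_card hT
      have h2 : Multiset.card T ≠ 2 := fun h =>
        hTne (Multiset.eq_of_le_of_card_le hT (by simp [h]))
      have h3 : Multiset.card T ≠ 0 := fun h => hT0 (Multiset.card_eq_zero.1 h)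
      have h4 : Multiset.card T = 1 := by omega
      obtain ⟨a, rfl⟩ := Multiset.card_eq_one.1 h4
      have ha : a ∈ ({1, -1} : Multiset (ZMod N)) := Multiset.mem_of_le hT (by simp)
      rw [Multiset.sum_singleton] at hs
      subst hs
      simp at ha
    · refine le_trans (cmul_cons 1 {-1}) ?_
      rw [cmul_nodup (by simp)]
      omega
  have h := Nat.sSup_mem ⟨2, hmem⟩ (bdd_SD (ZMod N) c)
  obtain ⟨S, h1, h2, h3⟩ := h
  exact ⟨S, h1, h2, h3, le_csSup (bdd_SD (ZMod N) c) hmem⟩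

lemma isMin_map {G H : Type*} [AddCommGroup G] [AddCommGroup H] (f : G →+ H)
    (hf : Function.Injective f) {S : Multiset G} (hS : IsMinimalZeroSum S) :
    IsMinimalZeroSum (S.map f) := by
  classical
  obtain ⟨h0, h1, h2⟩ := hS
  refine ⟨by simpa using h0, by rw [← map_multiset_sum, h1, _root_.map_zero], ?_⟩
  intro T hT hT0 hTne hs
  obtain ⟨U, hU, rfl⟩ : ∃ U ≤ S, U.map f = T := by
    have hTr : ∃ U : Multiset G, U.map f = T := by
      refine ⟨T.map (Function.invFun f), ?_⟩
      rw [Multiset.map_map]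
      conv_rhs => rw [← Multiset.map_id T]
      refine Multiset.map_congr rfl fun x hx => ?_
      obtain ⟨y, -, rfl⟩ := Multiset.mem_map.1 (Multiset.mem_of_le hT hx)
      exact Function.invFun_eq ⟨y, rfl⟩
    obtain ⟨U, rfl⟩ := hTr
    exact ⟨U, (Multiset.map_le_map_iff hf).1 hT, rfl⟩
  rw [← map_multiset_sum] at hs
  exact h2 U hU (by rintro rfl; simp at hT0) (by rintro rfl; exact hTne rfl)
    (hf (by rw [hs, _root_.map_zero]))

lemma cmul_map {G H : Type*} [AddCommGroup G] [AddCommGroup H] (f : G →+ H)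
    (hf : Function.Injective f) (S : Multiset G) : cmul 1 (S.map f) = cmul 1 S := by
  classical
  have h1 := cmul_add_card (S.map f)
  have h2 := cmul_add_card S
  rw [← Finset.card_val, Multiset.toFinset_val, Multiset.dedup_map_of_injective hf,
    Multiset.card_map, Multiset.card_map] at h1
  rw [← Finset.card_val, Multiset.toFinset_val] at h2
  omega

lemma St_start {r : ℕ} (n : Fin r → ℕ) (hn1 : ∀ i, 1 < n i) (t : Fin r) (c : ℕ) (hc : 1 ≤ c) :
    St n {t} c (SDk (ZMod (n t)) c) ∧ 2 ≤ SDk (ZMod (n t)) c := by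
  classical
  obtain ⟨S, h1, h2, h3, h4⟩ := SD_cyclic (n t) (hn1 t) c hc
  refine ⟨?_, h4⟩
  let f := AddMonoidHom.single (fun i => ZMod (n i)) t
  have hf : Function.Injective f := fun a b h => by
    have := congrFun h t
    simpa [f] using this
  refine ⟨S.map f, isMin_map f hf h1, by rw [cmul_map f hf]; exact h2, by simpa using h3, ?_⟩
  intro x hx j hj
  obtain ⟨a, -, rfl⟩ := Multiset.mem_map.1 hx
  rw [Finset.mem_singleton] at hj
  simp [f, hj]

lemma St_final {r : ℕ} (n : Fin r → ℕ) (hn1 : ∀ i, 1 < n i) (I : Finset (Fin r)) (k L : ℕ)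
    (h : St n I k L) : L ≤ SDk (∀ i : Fin r, ZMod (n i)) k := by
  have hne : ∀ i, NeZero (n i) := fun i => ⟨by have := hn1 i; omega⟩
  obtain ⟨S, h1, h2, h3, -⟩ := h
  exact le_csSup (bdd_SD _ k) ⟨S, h1, h2, h3⟩

end helpers

/-- Theorem (lower bounds for `SD_k` of `C_{n_1} ⊕ … ⊕ C_{n_r}`).
Indices are zero-based: `t : Fin r` with `1 ≤ t.val` corresponds to the
one-based index `t ∈ [2, r]`, and the hypothesis `hts` states
`n_s < Π_{i<s} n_i` for every `s > t`.
(1) If `n_{t−1} ≠ n_t`, then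
`SD_k(G) ≥ Σ_{i ≠ t} (n_i − 1) + SD_{k+r−1}(C_{n_t})`.
(2) If `k + r > 2`, then
`SD_k(G) ≥ Σ_{i ≠ t} (n_i − 1) + SD_{k+r−2}(C_{n_t})`. -/
theorem SDk_lower_bound_general (r : ℕ) (hr : 2 ≤ r) (n : Fin r → ℕ)
    (hn1 : ∀ i, 1 < n i) (hmono : ∀ i j : Fin r, i ≤ j → n i ≤ n j)
    (k : ℕ) (t : Fin r) (ht : 1 ≤ t.val)
    (hts : ∀ s : Fin r, t < s → n s < ∏ i ∈ Finset.Iio s, n i) :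
    ((n ⟨t.val - 1, lt_of_le_of_lt (Nat.sub_le _ _) t.isLt⟩ ≠ n t) →
      (∑ i ∈ Finset.univ.erase t, (n i - 1)) + SDk (ZMod (n t)) (k + r - 1) ≤
        SDk (∀ i : Fin r, ZMod (n i)) k) ∧
    (2 < k + r →
      (∑ i ∈ Finset.univ.erase t, (n i - 1)) + SDk (ZMod (n t)) (k + r - 2) ≤
        SDk (∀ i : Fin r, ZMod (n i)) k) := by 
  classical
  have hprod : ∀ I J : Finset (Fin r), I ⊆ J → ∏ i ∈ I, n i ≤ ∏ i ∈ J, n i := fun I J h =>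
    Finset.prod_le_prod_of_subset_of_one_le' h fun i _ _ => (hn1 i).le
  constructor
  · intro hne
    obtain ⟨h1, h2⟩ := St_start n hn1 t (k + r - 1) (by omega)
    have h3 := St_chain n hn1 {t} _ _ h2 (fun i hi => ?_) h1
    · have hcard : ({t}ᶜ : Finset (Fin r)).card = r - 1 := by
        rw [Finset.card_compl, Fintype.card_fin, Finset.card_singleton]
      rw [hcard, show k + r - 1 - (r - 1) = k by omega] at h3
      have h4 := St_final n hn1 _ _ _ h3
      rw [show (Finset.univ.erase t) = ({t}ᶜ : Finset (Fin r)) by ext; simp]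
      omega
    · rw [Finset.mem_singleton] at hi
      rcases lt_or_gt_of_ne hi with hlt | hgt
      · set p : Fin r := ⟨t.val - 1, lt_of_le_of_lt (Nat.sub_le _ _) t.isLt⟩ with hp
        have h5 : n i ≤ n p := hmono i p (by rw [Fin.le_def, hp]; rw [Fin.lt_def] at hlt; simp; omega)
        have h6 : n p ≤ n t := hmono p t (by rw [Fin.le_def, hp]; simp)
        have h7 := hprod {t} ({t} ∪ Finset.Iio i) Finset.subset_union_left
        rw [Finset.prod_singleton] at h7
        omega
      · exact lt_of_lt_of_le (hts i hgt) (hprod _ _ Finset.subset_union_right)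
  · intro hk
    obtain ⟨h1, h2⟩ := St_start n hn1 t (k + r - 2) (by omega)
    let z : Fin r := ⟨0, by omega⟩
    have hzt : z ≠ t := by
      intro h
      rw [← h] at ht
      simp [z] at ht
    have hzt' : z ∉ ({t} : Finset (Fin r)) := by simpa using hzt
    have hz : n z ≤ n t := hmono z t (by rw [Fin.le_def]; simp [z])
    have h1' := St_weak n hn1 {t} z hzt' _ _ h2 (by omega)
      (by rw [Finset.prod_singleton]; exact hz) h1
    have h3 := St_chain n hn1 {z, t} _ _ (by omega) (fun i hi => ?_) h1'
    · have hcard : ({z, t}ᶜ : Finset (Fin r)).card = r - 2 := by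
        rw [Finset.card_compl, Fintype.card_fin, Finset.card_pair hzt]
      rw [hcard, show k + r - 2 - (r - 2) = k by omega] at h3
      have h4 := St_final n hn1 _ _ _ h3
      have h5 : (Finset.univ.erase t) = insert z ({z, t}ᶜ : Finset (Fin r)) := by
        ext x
        simp only [Finset.mem_erase, Finset.mem_univ, and_true, Finset.mem_insert,
          Finset.mem_compl, Finset.mem_singleton]
        by_cases hx : x = z
        · simp [hx, hzt]
        · simp [hx]
      rw [h5, Finset.sum_insert (by simp)]
      omega
    · simp only [Finset.mem_insert, Finset.mem_singleton, not_or] at hi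
      rcases lt_or_gt_of_ne hi.2 with hlt | hgt
      · have h5 : n i ≤ n t := hmono i t hlt.le
        have h7 := hprod {z, t} ({z, t} ∪ Finset.Iio i) Finset.subset_union_left
        rw [Finset.prod_pair hzt] at h7
        have h8 := hn1 z
        have h9 := hn1 t
        have h10 : 2 * n t ≤ n z * n t := Nat.mul_le_mul_right _ h8
        omega
      · exact lt_of_lt_of_le (hts i hgt) (hprod _ _ Finset.subset_union_right)
end

section
/- Let r ≥ 2 and 1 < n_1 ≤ … ≤ n_r be integers, and let k ∈ ℕ₀. Then for each s ∈ [0, r−2], and additionally for s = r−1 in case n_{r−1} ≠ n_r, one has SD_k(C_{n_1} ⊕ … ⊕ C_{n_r}) ≥ Σ_{i=1}^{s} (n_i − 1) + SD_{k+s}(C_{n_{s+1}} ⊕ … ⊕ C_{n_r}). Moreover, if k + r > 2, then SD_k(C_{n_1} ⊕ … ⊕ C_{n_r}) ≥ Σ_{i=1}^{r−1} (n_i − 1) + SD_{k+r−2}(C_{n_r}). -/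
open Multiset

lemma aux_cmul {G : Type*} [AddCommMonoid G] [DecidableEq G] (S : Multiset G) :
    cmul 1 S + S.toFinset.card = S.card := by
  have : cmul 1 S = ∑ g ∈ S.toFinset, (S.count g - 1) := by
    unfold cmul
    congr!
  rw [this, Finset.card_eq_sum_ones, ← Finset.sum_add_distrib, ← Multiset.toFinset_sum_count_eq]
  apply Finset.sum_congr rfl
  intro x hx
  have := Multiset.count_pos.2 (Multiset.mem_toFinset.1 hx)
  omega

lemma aux_bdd (G : Type*) [AddCommGroup G] [Finite G] (k : ℕ) :
    BddAbove {m | ∃ S : Multiset G, IsMinimalZeroSum S ∧ cmul 1 S ≤ k ∧ Multiset.card S = m} := by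
  classical
  have := Fintype.ofFinite G
  refine ⟨Fintype.card G * Fintype.card G, ?_⟩
  rintro m ⟨S, ⟨h0, hs, hm⟩, -, rfl⟩
  rw [← Multiset.toFinset_sum_count_eq]
  have hc : ∀ g ∈ S.toFinset, S.count g ≤ Fintype.card G := by
    intro g _
    by_contra! hlt
    have ho : addOrderOf g ≤ Fintype.card G := addOrderOf_le_card_univ
    have hop : 0 < addOrderOf g := addOrderOf_pos g
    have hle : Multiset.replicate (addOrderOf g) g ≤ S :=
      Multiset.le_count_iff_replicate_le.1 (by omega)
    refine hm _ hle ?_ ?_ (by simp)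
    · intro h
      have := congrArg Multiset.card h
      rw [Multiset.card_replicate, Multiset.card_zero] at this
      omega
    · intro h
      have := congrArg (Multiset.count g) h
      rw [Multiset.count_replicate_self] at this
      omega
  refine (Finset.sum_le_card_nsmul _ _ _ hc).trans ?_
  rw [smul_eq_mul]
  exact Nat.mul_le_mul_right _ (Finset.card_le_univ _)

lemma aux_zero (G : Type*) [AddCommMonoid G] : IsMinimalZeroSum ({0} : Multiset G) := by
  refine ⟨by simp, by simp, ?_⟩
  intro T hT h0 h1
  rcases Multiset.le_singleton.1 hT with h | h <;> contradiction

lemma aux_mem (G : Type*) [AddCommGroup G] [Finite G] (k : ℕ) :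
    ∃ S : Multiset G, IsMinimalZeroSum S ∧ cmul 1 S ≤ k ∧ Multiset.card S = SDk G k := by
  classical
  have := Nat.sSup_mem (s := {m | ∃ S : Multiset G, IsMinimalZeroSum S ∧ cmul 1 S ≤ k ∧
    Multiset.card S = m}) ⟨1, {0}, aux_zero G, by have := aux_cmul ({0} : Multiset G); simp at this; omega, by simp⟩
    (aux_bdd G k)
  exact this

lemma aux_le {G : Type*} [AddCommGroup G] [Finite G] {k : ℕ} {S : Multiset G}
    (h : IsMinimalZeroSum S) (hc : cmul 1 S ≤ k) : S.card ≤ SDk G k :=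
  le_csSup (aux_bdd G k) ⟨S, h, hc, rfl⟩

lemma aux_inj {G H : Type*} [AddCommGroup G] [AddCommGroup H] [Finite G] [Finite H]
    (f : G →+ H) (hf : Function.Injective f) (k : ℕ) : SDk G k ≤ SDk H k := by
  classical
  obtain ⟨S, ⟨h0, hs, hm⟩, hc, hk⟩ := aux_mem G k
  rw [← hk, ← Multiset.card_map f]
  refine aux_le ⟨by simpa using h0, ?_, ?_⟩ ?_
  · rw [← map_multiset_sum, hs]; exact f.map_zero
  · intro T hT hT0 hTS h
    obtain ⟨U, hU, rfl⟩ : ∃ U, U ≤ S ∧ U.map f = T := by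
      refine ⟨T.map (Function.invFun f), ?_, ?_⟩
      · have := Multiset.map_le_map (f := Function.invFun f) hT
        rwa [Multiset.map_map, Function.invFun_comp hf, Multiset.map_id] at this
      · rw [Multiset.map_map]
        conv_rhs => rw [← Multiset.map_id T]
        apply Multiset.map_congr rfl
        intro x hx
        obtain ⟨y, -, rfl⟩ := Multiset.mem_map.1 (Multiset.mem_of_le hT hx)
        simp [Function.leftInverse_invFun hf y]
    refine hm U hU (by simpa using hT0) (fun h => hTS (by rw [h])) ?_
    rw [← map_multiset_sum] at h
    exact hf (by simpa using h)
  · have h1 := aux_cmul S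
    have h2 := aux_cmul (S.map f)
    rw [Multiset.toFinset_map, Finset.card_image_of_injective _ hf, Multiset.card_map] at h2
    omega

lemma aux_two {G : Type*} [AddCommGroup G] [Finite G] [Nontrivial G] {k : ℕ} (hk : 1 ≤ k) :
    2 ≤ SDk G k := by
  classical
  obtain ⟨g, hg⟩ := exists_ne (0 : G)
  have : ({g, -g} : Multiset G).card = 2 := by simp
  rw [← this]
  refine aux_le ⟨by simp, by simp, ?_⟩ ?_
  · intro T hT h0 h1 hs
    have hc := Multiset.card_lt_card (lt_of_le_of_ne hT h1)
    have hc0 : 0 < T.card := Multiset.card_pos.2 h0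
    obtain ⟨x, rfl⟩ := Multiset.card_eq_one.1 (show T.card = 1 by omega)
    have := Multiset.mem_of_le hT (Multiset.mem_singleton_self x)
    simp at this hs
    rcases this with h | h <;> simp_all
  · have := aux_cmul ({g, -g} : Multiset G)
    have h2 : 0 < (({g, -g} : Multiset G).toFinset).card := by
      apply Finset.card_pos.2
      exact ⟨g, by simp⟩
    have h3 : ({g, -g} : Multiset G).card = 2 := by simp
    omega

lemma aux_min {H : Type*} [AddCommGroup H] [DecidableEq H] (m : ℕ) (S h : Multiset H) (g : H)
    (hS : IsMinimalZeroSum S) (hg : g ∈ S) (hm : 0 < m) (hh : h.card = m) (hsum : h.sum = g) :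
    IsMinimalZeroSum ((S.erase g).map (AddMonoidHom.inr (ZMod m) H) +
      h.map (fun x => ((1 : ZMod m), x))) := by
  obtain ⟨hS0, hSs, hSm⟩ := hS
  have hge : g + (S.erase g).sum = 0 := by
    rw [← Multiset.sum_cons, Multiset.cons_erase hg, hSs]
  have hfst : ∀ B : Multiset H, (B.map (fun x => ((1 : ZMod m), x))).sum = ((B.card : ZMod m), B.sum) := by
    intro B
    induction B using Multiset.induction with
    | empty => simp; rfl
    | cons a s ih => simp [ih, add_comm]
  have hsnd : ∀ A : Multiset H, (A.map (AddMonoidHom.inr (ZMod m) H)).sum = (0, A.sum) := by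
    intro A
    rw [← map_multiset_sum]; rfl
  refine ⟨?_, ?_, ?_⟩
  · intro h0
    have := congrArg Multiset.card h0
    simp at this
    have := this.2
    simp [this] at hh
    omega
  · rw [Multiset.sum_add, hfst, hsnd, hh, hsum]
    simp [add_comm, hge]
  · intro T hT hT0 hTS hs
    -- split T
    obtain ⟨A, B, hA, hB, rfl⟩ : ∃ A B, A ≤ S.erase g ∧ B ≤ h ∧
        T = A.map (AddMonoidHom.inr (ZMod m) H) + B.map (fun x => ((1 : ZMod m), x)) := by
      obtain ⟨A', hA', B', hB', rfl⟩ : ∃ A' ≤ (S.erase g).map (AddMonoidHom.inr (ZMod m) H),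
          ∃ B' ≤ h.map (fun x => ((1 : ZMod m), x)), T = A' + B' := by
        refine ⟨T ∩ (S.erase g).map (AddMonoidHom.inr (ZMod m) H), Multiset.inter_le_right,
          T - (S.erase g).map (AddMonoidHom.inr (ZMod m) H), ?_, ?_⟩
        · rw [tsub_le_iff_left]; exact hT
        · ext x
          simp only [Multiset.count_add, Multiset.count_inter, Multiset.count_sub]
          omega
      refine ⟨A'.map Prod.snd, B'.map Prod.snd, ?_, ?_, ?_⟩
      · have := Multiset.map_le_map (f := Prod.snd) hA'
        simpa [Multiset.map_map, Function.comp_def] using this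
      · have := Multiset.map_le_map (f := Prod.snd) hB'
        simpa [Multiset.map_map, Function.comp_def] using this
      · congr 1
        · rw [Multiset.map_map]
          conv_lhs => rw [← Multiset.map_id A']
          apply Multiset.map_congr rfl
          intro x hx
          obtain ⟨y, -, rfl⟩ := Multiset.mem_map.1 (Multiset.mem_of_le hA' hx)
          rfl
        · rw [Multiset.map_map]
          conv_lhs => rw [← Multiset.map_id B']
          apply Multiset.map_congr rfl
          intro x hx
          obtain ⟨y, -, rfl⟩ := Multiset.mem_map.1 (Multiset.mem_of_le hB' hx)
          rfl
    rw [Multiset.sum_add, hfst, hsnd] at hs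
    have h1 : (B.card : ZMod m) = 0 := by simpa using congrArg Prod.fst hs
    have h2 : A.sum + B.sum = 0 := by simpa using congrArg Prod.snd hs
    rw [ZMod.natCast_eq_zero_iff] at h1
    have hBc := Multiset.card_le_card hB
    rcases Nat.eq_zero_or_pos B.card with hB0 | hB0
    · obtain rfl := Multiset.card_eq_zero.1 hB0
      have hlt : A < S := lt_of_le_of_lt hA (Multiset.erase_lt.2 hg)
      exact hSm A hlt.le (by simpa using hT0) hlt.ne (by simpa using h2)
    · have hBm := Nat.le_of_dvd hB0 h1
      obtain rfl : B = h := Multiset.eq_of_le_of_card_le hB (by omega)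
      have hle : g ::ₘ A ≤ S := by
        rw [← Multiset.cons_erase hg]; exact Multiset.cons_le_cons _ hA
      refine hSm (g ::ₘ A) hle (by simp) ?_ ?_
      · intro he
        apply hTS
        rw [← he, Multiset.erase_cons_head]
      · rw [Multiset.sum_cons, ← hsum, add_comm, h2]

lemma aux_step {H : Type*} [AddCommGroup H] [Finite H] [Nontrivial H] (m c K : ℕ) (hm1 : 1 < m)
    (hex : ∀ g : H, g ≠ 0 → ∃ h : Multiset H, h.card = m ∧ h.sum = g ∧ cmul 1 h ≤ c)
    (hK : c ≤ K) : (m - 1) + SDk H (K + 1 - c) ≤ SDk (ZMod m × H) K := by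
  classical
  have hm : 0 < m := by omega
  have : NeZero m := ⟨hm.ne'⟩
  obtain ⟨S, hS, hc, hk⟩ := aux_mem H (K + 1 - c)
  have h2 : 2 ≤ S.card := by rw [hk]; exact aux_two (by omega)
  have hcS := aux_cmul S
  obtain ⟨g, hg, hgc⟩ : ∃ g ∈ S, cmul 1 (S.erase g) + c ≤ K := by
    by_cases hnd : S.Nodup
    · obtain ⟨g, hg⟩ := Multiset.exists_mem_of_ne_zero hS.1
      refine ⟨g, hg, ?_⟩
      have h1 := aux_cmul (S.erase g)
      rw [Multiset.toFinset_card_of_nodup (hnd.erase g)] at h1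
      omega
    · rw [Multiset.nodup_iff_count_le_one] at hnd
      push Not at hnd
      obtain ⟨g, hg⟩ := hnd
      have hgS : g ∈ S := Multiset.count_pos.1 (by omega)
      refine ⟨g, hgS, ?_⟩
      have h1 := aux_cmul (S.erase g)
      have h3 : (S.erase g).toFinset = S.toFinset := by
        ext x
        simp only [Multiset.mem_toFinset]
        by_cases hx : x = g
        · subst hx
          simp only [hgS, iff_true]
          apply Multiset.count_pos.1
          rw [Multiset.count_erase_self]; omega
        · exact Multiset.mem_erase_of_ne hx
      rw [h3, Multiset.card_erase_of_mem hgS, Nat.pred_eq_sub_one] at h1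
      omega
  have hg0 : g ≠ 0 := by
    rintro rfl
    refine hS.2.2 {0} (Multiset.singleton_le.2 hg) (by simp) ?_ (by simp)
    intro h
    rw [← h] at h2
    simp at h2
  obtain ⟨h, hh, hsum, hhc⟩ := hex g hg0
  have hmin := aux_min m S h g hS hg hm hh hsum
  have hinj : Function.Injective (AddMonoidHom.inr (ZMod m) H) := by
    intro x y hxy
    simpa using congrArg Prod.snd hxy
  have hinj' : Function.Injective (fun x : H => ((1 : ZMod m), x)) := by
    intro x y hxy
    simpa using congrArg Prod.snd hxy
  have hdisj : Disjoint ((S.erase g).map (AddMonoidHom.inr (ZMod m) H)).toFinset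
      (h.map (fun x => ((1 : ZMod m), x))).toFinset := by
    rw [Finset.disjoint_left]
    intro x hx hx'
    simp only [Multiset.mem_toFinset, Multiset.mem_map] at hx hx'
    obtain ⟨a, -, rfl⟩ := hx
    obtain ⟨b, -, hb⟩ := hx'
    have : (1 : ZMod m) = 0 := by simpa using congrArg Prod.fst hb
    have h5 : ((1 : ℕ) : ZMod m) = 0 := by simpa using this
    rw [ZMod.natCast_eq_zero_iff] at h5
    have := Nat.dvd_one.1 h5
    omega
  have hcm := aux_cmul ((S.erase g).map (AddMonoidHom.inr (ZMod m) H) +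
      h.map (fun x => ((1 : ZMod m), x)))
  rw [Multiset.toFinset_add, Finset.card_union_of_disjoint hdisj, Multiset.toFinset_map,
    Multiset.toFinset_map, Finset.card_image_of_injective _ hinj,
    Finset.card_image_of_injective _ hinj', Multiset.card_add, Multiset.card_map,
    Multiset.card_map] at hcm
  have e1 := aux_cmul (S.erase g)
  have e2 := aux_cmul h
  have := aux_le (k := K) hmin (by omega)
  rw [Multiset.card_add, Multiset.card_map, Multiset.card_map,
    Multiset.card_erase_of_mem hg, Nat.pred_eq_sub_one] at this
  omega

lemma aux_A (m N : ℕ) (hm : 0 < m) (hN : m < N) (c : ZMod N) :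
    ∃ f : Fin m → ZMod N, Function.Injective f ∧ ∑ i, f i = c := by
  have : NeZero N := ⟨by omega⟩
  set C : ZMod N := ∑ i : Fin (m + 1), (i.val : ZMod N) with hC
  set D : ℕ := (C - c).val with hD
  have hDc : (D : ZMod N) = C - c := by rw [hD]; simp
  let e : Fin (m + 1) := ⟨D % m, by have := Nat.mod_lt D hm; omega⟩
  refine ⟨fun i => ((e.succAbove i).val : ZMod N) - (D / m : ℕ), ?_, ?_⟩
  · intro x y hxy
    simp only [sub_left_inj] at hxy
    rw [ZMod.natCast_eq_natCast_iff', Nat.mod_eq_of_lt, Nat.mod_eq_of_lt] at hxy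
    · exact Fin.succAbove_right_injective (Fin.ext hxy)
    · have := (e.succAbove y).isLt; omega
    · have := (e.succAbove x).isLt; omega
  · have h1 := Fin.sum_univ_succAbove (fun i : Fin (m + 1) => (i.val : ZMod N)) e
    rw [← hC] at h1
    rw [Finset.sum_sub_distrib]
    have h2 : ((e.val : ℕ) : ZMod N) + (m : ZMod N) * ((D / m : ℕ) : ZMod N) = D := by
      have : e.val + m * (D / m) = D := Nat.mod_add_div D m
      exact_mod_cast congrArg (Nat.cast : ℕ → ZMod N) this
    simp only [Finset.sum_const, Finset.card_univ, Fintype.card_fin, nsmul_eq_mul]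
    linear_combination -h1 - h2 - hDc

lemma aux_B (m : ℕ) (c : ZMod (m + 2)) :
    ∃ f : Fin (m + 2) → ZMod (m + 2), (∑ i, f i = c) ∧ Set.InjOn f {0}ᶜ ∧
      ∃ b, b ≠ 0 ∧ ∀ x y, f x = f y → x = y ∨ (x = 0 ∧ y = b) ∨ (x = b ∧ y = 0) := by
  obtain ⟨φ, hφ⟩ : ∃ φ : Fin (m + 2) → ZMod (m + 2), Function.Bijective φ :=
    ⟨fun i => i, Function.bijective_id⟩
  set v : ZMod (m + 2) := c - ∑ i ∈ Finset.univ.erase (0 : Fin (m + 2)), φ i with hv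
  obtain ⟨w, hw⟩ := hφ.2 v
  let f : Fin (m + 2) → ZMod (m + 2) := Function.update φ 0 v
  have f0 : f 0 = φ w := by simp [f, hw]
  have f1 : ∀ i, i ≠ 0 → f i = φ i := by intro i hi; simp [f, hi]
  refine ⟨f, ?_, ?_, ?_⟩
  · rw [← Finset.add_sum_erase _ _ (Finset.mem_univ 0), f0,
      Finset.sum_congr rfl (fun i hi => f1 i (Finset.ne_of_mem_erase hi)), hw, hv]
    abel
  · intro x hx y hy hxy
    rw [f1 x hx, f1 y hy] at hxy
    exact hφ.1 hxy
  · refine ⟨if w = 0 then 1 else w, ?_, ?_⟩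
    · split_ifs with h
      · simp
      · exact h
    · intro x y hxy
      by_cases hx : x = 0 <;> by_cases hy : y = 0
      · left; rw [hx, hy]
      · right; left
        subst hx
        rw [f0, f1 y hy] at hxy
        obtain rfl := hφ.1 hxy
        simp [hy]
      · right; right
        subst hy
        rw [f0, f1 x hx] at hxy
        obtain rfl := hφ.1 hxy
        simp [hx]
      · left
        rw [f1 x hx, f1 y hy] at hxy
        exact hφ.1 hxy

lemma aux_fam {H : Type*} [AddCommGroup H] (m : ℕ) (g : H) (f : Fin m → H)
    (hf : Function.Injective f) (hs : ∑ i, f i = g) :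
    ∃ h : Multiset H, h.card = m ∧ h.sum = g ∧ cmul 1 h ≤ 0 := by
  classical
  refine ⟨Finset.univ.val.map f, by simp, hs, ?_⟩
  have h1 := aux_cmul (Finset.univ.val.map f)
  rw [Multiset.toFinset_card_of_nodup (Multiset.Nodup.map hf Finset.univ.nodup)] at h1
  omega

lemma aux_sum1 {r : ℕ} (n : Fin r → ℕ) (m : ℕ) (hm : 2 ≤ m) (j : Fin r) (hj : m < n j)
    (g : ∀ i, ZMod (n i)) :
    ∃ h : Multiset (∀ i, ZMod (n i)), h.card = m ∧ h.sum = g ∧ cmul 1 h ≤ 0 := by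
  obtain ⟨f, hf, hs⟩ := aux_A m (n j) (by omega) hj (g j)
  let z : Fin m := ⟨0, by omega⟩
  refine aux_fam m g (fun i => Function.update (if i = z then g else 0) j (f i)) ?_ ?_
  · intro x y hxy
    apply hf
    simpa using congrFun hxy j
  · funext l
    rw [Finset.sum_apply]
    by_cases hl : l = j
    · subst hl; simpa using hs
    · simp only [Function.update_of_ne hl]
      rw [Finset.sum_eq_single z]
      · simp
      · intro b _ hb; simp [hb]
      · simp

lemma aux_sum2 {r : ℕ} (n : Fin r → ℕ) (m : ℕ) (hm : 2 ≤ m) (j j' : Fin r) (hjj : j ≠ j')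
    (hj : n j = m) (hj' : n j' = m) (g : ∀ i, ZMod (n i)) (hg : g ≠ 0) :
    ∃ h : Multiset (∀ i, ZMod (n i)), h.card = m ∧ h.sum = g ∧ cmul 1 h ≤ 0 := by
  classical
  by_cases hm2 : m = 2
  · subst hm2
    refine ⟨{0, g}, by simp, by simp, ?_⟩
    have h1 := aux_cmul ({0, g} : Multiset (∀ i, ZMod (n i)))
    rw [Multiset.toFinset_card_of_nodup (by simpa using hg.symm)] at h1
    omega
  obtain ⟨f, hs, b, a, hab, hf⟩ : ∃ f : Fin m → ZMod (n j), (∑ i, f i = g j) ∧ ∃ b a, b ≠ a ∧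
      ∀ x y, f x = f y → x = y ∨ (x = a ∧ y = b) ∨ (x = b ∧ y = a) := by
    obtain ⟨m, rfl⟩ := Nat.exists_eq_add_of_le' hm
    generalize g j = c
    revert c
    rw [hj]
    intro c
    obtain ⟨f, h1, -, b, h2, h3⟩ := aux_B m c
    exact ⟨f, h1, b, 0, h2, h3⟩
  obtain ⟨d, hd⟩ : ∃ d : Fin m, d ∉ ({a, b} : Finset (Fin m)) := by
    by_contra! hcon
    have h1 : (Finset.univ : Finset (Fin m)) ⊆ {a, b} := fun x _ => hcon x
    have := Finset.card_le_card h1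
    have h2 : ({a, b} : Finset (Fin m)).card ≤ 2 := Finset.card_le_two
    simp only [Finset.card_univ, Fintype.card_fin] at this
    omega
  simp only [Finset.mem_insert, Finset.mem_singleton, not_or] at hd
  have hne : Fact (1 < n j') := ⟨by omega⟩
  let f' : Fin m → ZMod (n j') := Pi.single a 1 + Pi.single d (g j' - 1)
  have hf' : f' a ≠ f' b := by
    simp [f', hab, Ne.symm hd.1, Ne.symm hd.2]
  have hs' : ∑ i, f' i = g j' := by
    simp [f', Finset.sum_add_distrib]
  refine aux_fam m g (fun i => Function.update (Function.update (if i = a then g else 0) j (f i))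
    j' (f' i)) ?_ ?_
  · intro x y hxy
    have h1 : f x = f y := by simpa [hjj] using congrFun hxy j
    have h2 : f' x = f' y := by simpa using congrFun hxy j'
    rcases hf x y h1 with h | ⟨rfl, rfl⟩ | ⟨rfl, rfl⟩
    · exact h
    · exact absurd h2 hf'
    · exact absurd h2.symm hf'
  · funext l
    rw [Finset.sum_apply]
    by_cases hl' : l = j'
    · subst hl'; simpa using hs'
    by_cases hl : l = j
    · subst hl; simpa [hl'] using hs
    · simp only [Function.update_of_ne hl, Function.update_of_ne hl']
      rw [Finset.sum_eq_single a]
      · simp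
      · intro b _ hb; simp [hb]
      · simp

lemma aux_sum3 (n : Fin 1 → ℕ) (m : ℕ) (hm : 2 ≤ m) (hn : n 0 = m) (g : ∀ i, ZMod (n i)) :
    ∃ h : Multiset (∀ i, ZMod (n i)), h.card = m ∧ h.sum = g ∧ cmul 1 h ≤ 1 := by
  classical
  obtain ⟨f, hs, a, hf⟩ : ∃ f : Fin m → ZMod (n 0), (∑ i, f i = g 0) ∧ ∃ a, Set.InjOn f {a}ᶜ := by
    obtain ⟨m, rfl⟩ := Nat.exists_eq_add_of_le' hm
    generalize g 0 = c
    revert c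
    rw [hn]
    intro c
    obtain ⟨f, h1, h2, -⟩ := aux_B m c
    exact ⟨f, h1, 0, h2⟩
  let F : Fin m → ∀ i, ZMod (n i) := fun i => Function.update 0 0 (f i)
  have hF : Set.InjOn F {a}ᶜ := by
    intro x hx y hy hxy
    apply hf hx hy
    simpa [F] using congrFun hxy 0
  refine ⟨Finset.univ.val.map F, by simp, ?_, ?_⟩
  · change ∑ i, F i = g
    funext l
    rw [Finset.sum_apply]
    obtain rfl : l = 0 := Subsingleton.elim _ _
    simpa [F] using hs
  · have h1 := aux_cmul (Finset.univ.val.map F)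
    have h2 : ((Finset.univ.erase a).image F).card = m - 1 := by
      rw [Finset.card_image_of_injOn]
      · simp
      · intro x hx y hy
        exact hF (by simpa using hx) (by simpa using hy)
    have h3 : (Finset.univ.erase a).image F ⊆ (Finset.univ.val.map F).toFinset := by
      intro x hx
      simp only [Finset.mem_image] at hx
      obtain ⟨y, -, rfl⟩ := hx
      simp
    have h4 := Finset.card_le_card h3
    have h5 : (Finset.univ.val.map F).card = m := by simp
    omega

lemma aux_fin {r : ℕ} (n : Fin r → ℕ) (hn : ∀ i, 1 < n i) : Finite (∀ i, ZMod (n i)) := by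
  have : ∀ i, NeZero (n i) := fun i => ⟨by have := hn i; omega⟩
  infer_instance

lemma aux_cons {r : ℕ} (n : Fin (r + 1) → ℕ) (hn : ∀ i, 1 < n i) (k : ℕ) :
    SDk (ZMod (n 0) × ∀ i : Fin r, ZMod (n i.succ)) k ≤ SDk (∀ i, ZMod (n i)) k := by
  have := aux_fin n hn
  have := aux_fin (fun i : Fin r => n i.succ) (fun i => hn _)
  have : NeZero (n 0) := ⟨by have := hn 0; omega⟩
  let f : (ZMod (n 0) × ∀ i : Fin r, ZMod (n i.succ)) →+ (∀ i, ZMod (n i)) :=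
    AddMonoidHom.mk' (fun p => Fin.cons p.1 p.2) (by
      intro p q
      funext i
      refine Fin.cases ?_ (fun i => ?_) i <;> simp)
  refine aux_inj f ?_ k
  intro p q hpq
  have h0 := congrFun hpq 0
  have h1 : ∀ i : Fin r, f p i.succ = f q i.succ := fun i => congrFun hpq i.succ
  refine Prod.ext (by simpa [f] using h0) ?_
  funext i
  simpa [f] using h1 i

lemma aux_stepPi {r : ℕ} (n : Fin (r + 1) → ℕ) (hn : ∀ i, 1 < n i) (hr : 0 < r) (c K : ℕ)
    (hK : c ≤ K)
    (hex : ∀ g : (∀ i : Fin r, ZMod (n i.succ)), g ≠ 0 →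
      ∃ h : Multiset (∀ i : Fin r, ZMod (n i.succ)), h.card = n 0 ∧ h.sum = g ∧ cmul 1 h ≤ c) :
    (n 0 - 1) + SDk (∀ i : Fin r, ZMod (n i.succ)) (K + 1 - c) ≤ SDk (∀ i, ZMod (n i)) K := by
  have := aux_fin (fun i : Fin r => n i.succ) (fun i => hn _)
  have : ∀ i : Fin r, Fact (1 < n i.succ) := fun i => ⟨hn _⟩
  have : Nonempty (Fin r) := ⟨⟨0, hr⟩⟩
  have : Nontrivial (∀ i : Fin r, ZMod (n i.succ)) :=
    Pi.nontrivial_at (⟨0, hr⟩ : Fin r)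
  exact (aux_step (n 0) c K (hn 0) hex hK).trans (aux_cons n hn K)

lemma aux_ind (s : ℕ) : ∀ (r t k : ℕ) (n : Fin r → ℕ) (n' : Fin t → ℕ) (h : s + t = r),
    (∀ i, 1 < n i) →
    (∀ i : Fin r, i.val < s → (∃ j, i < j ∧ n i < n j) ∨
      (∃ j j', i < j ∧ j < j' ∧ n j = n i ∧ n j' = n i)) →
    (∀ i : Fin t, n' i = n ⟨s + i.val, by have := i.isLt; omega⟩) →
    (∑ i : Fin r, if i.val < s then n i - 1 else 0) + SDk (∀ i, ZMod (n' i)) (k + s) ≤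
      SDk (∀ i, ZMod (n i)) k := by
  induction s with
  | zero =>
    intro r t k n n' h hn _ hn'
    obtain rfl : t = r := by omega
    obtain rfl : n' = n := by
      funext i
      rw [hn' i]
      congr 1
      ext
      simp
    simp
  | succ s ih =>
    intro r t k n n' h hn hQ hn'
    obtain ⟨r, rfl⟩ : ∃ r', r = r' + 1 := ⟨r - 1, by omega⟩
    have hI := ih r t (k + 1) (fun i => n i.succ) n' (by omega) (fun i => hn _) (by
      intro i hi
      rcases hQ i.succ (by simpa using hi) with ⟨j, hj, hnj⟩ | ⟨j, j', hj, hj', h1, h2⟩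
      · left
        obtain ⟨j, rfl⟩ := Fin.exists_succ_eq.2 (Fin.ne_zero_of_lt hj)
        exact ⟨j, by simpa using hj, hnj⟩
      · right
        obtain ⟨j, rfl⟩ := Fin.exists_succ_eq.2 (Fin.ne_zero_of_lt hj)
        obtain ⟨j', rfl⟩ := Fin.exists_succ_eq.2 (Fin.ne_zero_of_lt hj')
        exact ⟨j, j', by simpa using hj, by simpa using hj', h1, h2⟩) (by
      intro i
      rw [hn' i]
      congr 1
      ext
      simp
      omega)
    have hst : 0 < r ∧ (n 0 - 1) + SDk (∀ i : Fin r, ZMod (n i.succ)) (k + 1 - 0) ≤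
        SDk (∀ i, ZMod (n i)) k := by
      rcases hQ 0 (by simp) with ⟨j, hj, hnj⟩ | ⟨j, j', hj, hj', h1, h2⟩
      · obtain ⟨j, rfl⟩ := Fin.exists_succ_eq.2 (Fin.ne_zero_of_lt hj)
        have hr : 0 < r := by have := j.isLt; omega
        exact ⟨hr, aux_stepPi n hn hr 0 k (by omega) (fun g _ =>
          aux_sum1 (fun i : Fin r => n i.succ) (n 0) (hn 0) j hnj g)⟩
      · obtain ⟨j, rfl⟩ := Fin.exists_succ_eq.2 (Fin.ne_zero_of_lt hj)
        obtain ⟨j', rfl⟩ := Fin.exists_succ_eq.2 (Fin.ne_zero_of_lt hj')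
        have hr : 0 < r := by have := j.isLt; omega
        exact ⟨hr, aux_stepPi n hn hr 0 k (by omega) (fun g hg =>
          aux_sum2 (fun i : Fin r => n i.succ) (n 0) (hn 0) j j'
            (by rintro rfl; simp at hj') h1 h2 g hg)⟩
    have hst := hst.2
    rw [Fin.sum_univ_succ]
    simp only [Fin.val_zero, Fin.val_succ, Nat.zero_lt_succ, if_true, Nat.add_lt_add_iff_right]
    rw [show k + (s + 1) = k + 1 + s by omega]
    simp only [Nat.sub_zero] at hst
    omega

lemma aux_one (N : ℕ) (n : Fin 1 → ℕ) (hn : ∀ i, 1 < n i) (h : n 0 = N) (k : ℕ) :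
    SDk (ZMod N) k ≤ SDk (∀ i, ZMod (n i)) k := by
  subst h
  have := aux_fin n hn
  have : NeZero (n 0) := ⟨by have := hn 0; omega⟩
  exact aux_inj (AddMonoidHom.single (fun i => ZMod (n i)) 0) (Pi.single_injective (M := fun i => ZMod (n i)) 0) k

/-- Proposition (splitting off small components). Indices are zero-based:
for each `s ∈ [0, r−2]`, and also for `s = r−1` in case `n_{r−1} ≠ n_r`
(one-based), one has
`SD_k(C_{n_1} ⊕ … ⊕ C_{n_r}) ≥ Σ_{i=1}^{s} (n_i − 1) + SD_{k+s}(C_{n_{s+1}} ⊕ … ⊕ C_{n_r})`.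
Moreover, if `k + r > 2`, then
`SD_k(C_{n_1} ⊕ … ⊕ C_{n_r}) ≥ Σ_{i=1}^{r−1} (n_i − 1) + SD_{k+r−2}(C_{n_r})`. -/
theorem SDk_split_small_components (r : ℕ) (hr : 2 ≤ r) (n : Fin r → ℕ)
    (hn1 : ∀ i, 1 < n i) (hmono : ∀ i j : Fin r, i ≤ j → n i ≤ n j) (k : ℕ) :
    (∀ s : ℕ,
      (s ≤ r - 2 ∨ (s = r - 1 ∧ n ⟨r - 2, by omega⟩ ≠ n ⟨r - 1, by omega⟩)) →
      (∑ i : Fin r, if i.val < s then n i - 1 else 0) +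
          SDk (∀ i : Fin (r - s),
            ZMod (n ⟨s + i.val, by have h := i.isLt; omega⟩)) (k + s) ≤
        SDk (∀ i : Fin r, ZMod (n i)) k) ∧
    (2 < k + r →
      (∑ i : Fin r, if i.val < r - 1 then n i - 1 else 0) +
          SDk (ZMod (n ⟨r - 1, by omega⟩)) (k + r - 2) ≤
        SDk (∀ i : Fin r, ZMod (n i)) k) := by 
  classical
  have key : ∀ s : ℕ, (s ≤ r - 2 ∨ (s = r - 1 ∧ n ⟨r - 2, by omega⟩ ≠ n ⟨r - 1, by omega⟩)) →
      (∑ i : Fin r, if i.val < s then n i - 1 else 0) +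
          SDk (∀ i : Fin (r - s),
            ZMod (n ⟨s + i.val, by have h := i.isLt; omega⟩)) (k + s) ≤
        SDk (∀ i : Fin r, ZMod (n i)) k := by
    intro s hs
    refine aux_ind s r (r - s) k n
      (fun i => n ⟨s + i.val, by have h := i.isLt; omega⟩) (by omega) hn1 ?_ (fun i => rfl)
    intro i hi
    by_cases hlt : n i < n ⟨r - 1, by omega⟩
    · exact Or.inl ⟨⟨r - 1, by omega⟩, Fin.lt_def.2 (by simp only; omega), hlt⟩
    right
    have h1 : n i ≤ n ⟨r - 2, by omega⟩ := hmono _ _ (Fin.le_def.2 (by simp only; omega))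
    have h2 : n ⟨r - 2, by omega⟩ ≤ n ⟨r - 1, by omega⟩ :=
      hmono _ _ (Fin.le_def.2 (by simp only; omega))
    have hs2 : s ≤ r - 2 := by
      rcases hs with h | ⟨-, h⟩
      · exact h
      · omega
    exact ⟨⟨r - 2, by omega⟩, ⟨r - 1, by omega⟩, Fin.lt_def.2 (by simp only; omega),
      Fin.lt_def.2 (by simp only; omega), by omega, by omega⟩
  refine ⟨key, ?_⟩
  intro hkr
  obtain ⟨q, rfl⟩ : ∃ q, r = q + 2 := ⟨r - 2, by omega⟩
  let n' : Fin 2 → ℕ := fun i => n ⟨q + i.val, by have h := i.isLt; omega⟩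
  have hn' : ∀ i, 1 < n' i := fun i => hn1 _
  have h1 : (∑ i : Fin (q + 2), if i.val < q then n i - 1 else 0) +
      SDk (∀ i, ZMod (n' i)) (k + q) ≤ SDk (∀ i : Fin (q + 2), ZMod (n i)) k := by
    refine aux_ind q (q + 2) 2 k n n' rfl hn1 ?_ (fun i => rfl)
    intro i hi
    by_cases hlt : n i < n ⟨q + 1, by omega⟩
    · exact Or.inl ⟨⟨q + 1, by omega⟩, Fin.lt_def.2 (by simp only; omega), hlt⟩
    right
    have h1 : n i ≤ n ⟨q, by omega⟩ := hmono _ _ (Fin.le_def.2 (by simp only; omega))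
    have h2 : n ⟨q, by omega⟩ ≤ n ⟨q + 1, by omega⟩ :=
      hmono _ _ (Fin.le_def.2 (by simp only; omega))
    exact ⟨⟨q, by omega⟩, ⟨q + 1, by omega⟩, Fin.lt_def.2 (by simp only; omega),
      Fin.lt_def.2 (by simp only; omega), by omega, by omega⟩
  have hle : n' 0 ≤ n' 1 := hmono _ _ (Fin.le_def.2 (by simp))
  have h2 : (n' 0 - 1) + SDk (∀ i : Fin 1, ZMod (n' i.succ)) (k + q + 1 - 1) ≤
      SDk (∀ i, ZMod (n' i)) (k + q) := by
    refine aux_stepPi n' hn' (by omega) 1 (k + q) (by omega) (fun g _ => ?_)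
    rcases hle.lt_or_eq with hlt | heq
    · obtain ⟨h, e1, e2, e3⟩ :=
        aux_sum1 (fun i : Fin 1 => n' i.succ) (n' 0) (hn' 0) 0 hlt g
      exact ⟨h, e1, e2, by omega⟩
    · exact aux_sum3 (fun i : Fin 1 => n' i.succ) (n' 0) (hn' 0) heq.symm g
  have h3 := aux_one (n ⟨q + 2 - 1, by omega⟩) (fun i : Fin 1 => n' i.succ) (fun i => hn' _) rfl
    (k + q)
  have h4 : (∑ i : Fin (q + 2), if i.val < q + 2 - 1 then n i - 1 else 0) =
      (∑ i : Fin (q + 2), if i.val < q then n i - 1 else 0) + (n' 0 - 1) := by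
    rw [Fin.sum_univ_castSucc, Fin.sum_univ_castSucc, Fin.sum_univ_castSucc,
      Fin.sum_univ_castSucc]
    have e : ∀ x : Fin q, x.val < q + 1 := fun x => by have := x.isLt; omega
    simp [n', e]
    rfl
  rw [h4, show k + (q + 2) - 2 = k + q by omega]
  rw [show k + q + 1 - 1 = k + q by omega] at h2
  omega
end
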